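/- arXiv:2108.03295 — 2 statements merged into one kernel-verified Lean document; each statement's English description precedes it below -/
import Mathlib

section
/- Let P be a partially ordered set with a greatest element ⊤. If a, b ∈ P are non-generators and c ∈ P is a least upper bound of a and b (i.e., the join a ∨ b exists in P and equals c), then c is a non-generator. -/
def JoinIsTop {P : Type*} [PartialOrder P] [OrderTop P] (a e : P) : Prop :=
  ¬ ∃ p : P, p < ⊤ ∧ a ≤ p ∧ e ≤ p

def NonGenerator {P : Type*} [PartialOrder P] [OrderTop P] (a : P) : Prop :=
  ∀ e : P, JoinIsTop a e → e = ⊤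

theorem stmt_1 {P : Type*} [PartialOrder P] [OrderTop P] (a b c : P)
    (ha : NonGenerator a) (hb : NonGenerator b)
    (hc : IsLUB {a, b} c) : NonGenerator c := by
  intro e he
  by_contra hne
  have h1 : ∃ p : P, p < ⊤ ∧ a ≤ p ∧ e ≤ p := by
    by_contra h
    exact hne (ha e h)
  obtain ⟨p, hp, hap, hep⟩ := h1
  have h2 : ∃ q : P, q < ⊤ ∧ b ≤ q ∧ p ≤ q := by
    by_contra h
    exact hp.ne (hb p h)
  obtain ⟨q, hq, hbq, hpq⟩ := h2
  refine he ⟨q, hq, hc.2 ?_, hep.trans hpq⟩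
  rintro x (rfl | rfl)
  · exact hap.trans hpq
  · exact hbq
end

section
/- Let R be a partially ordered set with greatest element ⊤ and let P ⊆ R with ⊤ ∈ P. Let a ∈ R and suppose c is a smallest element of P above a, that is, c ∈ P, a ≤ c, and c ≤ d for every d ∈ P with a ≤ d. Then a is a P-non-generator in R if and only if c is a non-generator in the induced partial order on P, i.e., for every e ∈ P, if there is no p ∈ P with p < ⊤, c ≤ p and e ≤ p, then e = ⊤. -/
/-- `Y` P-generates `⊤`: no closed bound of `Y` below `⊤`. -/
def PGeneratesTop {R : Type*} [PartialOrder R] [OrderTop R] (P : Set R) (Y : Set R) : Prop :=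
  ¬ ∃ b ∈ P, b < ⊤ ∧ ∀ y ∈ Y, y ≤ b

def PNonGenerator {R : Type*} [PartialOrder R] [OrderTop R] (P : Set R) (a : R) : Prop :=
  ∀ e : R, PGeneratesTop P {a, e} → PGeneratesTop P {e}

theorem stmt_15 {R : Type*} [PartialOrder R] [OrderTop R] (P : Set R)
    (htop : (⊤ : R) ∈ P) (a c : R)
    (hcP : c ∈ P) (hac : a ≤ c) (hmin : ∀ d ∈ P, a ≤ d → c ≤ d) :
    PNonGenerator P a ↔
      ∀ e ∈ P, (¬ ∃ p ∈ P, p < ⊤ ∧ c ≤ p ∧ e ≤ p) → e = ⊤ := by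
  constructor
  · intro h e he hno
    by_contra hne
    refine h e ?_ ⟨e, he, lt_top_iff_ne_top.mpr hne, ?_⟩
    · rintro ⟨b, hb, hlt, hle⟩
      exact hno ⟨b, hb, hlt, hmin b hb (hle a (by simp)), hle e (by simp)⟩
    · intro y hy
      exact le_of_eq hy
  · rintro h e hgen ⟨b, hb, hlt, hle⟩
    refine hlt.ne (h b hb ?_)
    rintro ⟨p, hp, hpt, hcp, hbp⟩
    refine hgen ⟨p, hp, hpt, ?_⟩
    rintro y (rfl | rfl)
    · exact hac.trans hcp
    · exact (hle _ rfl).trans hbp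
end
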